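/- arXiv:0901.2621 — 2 statements merged into one kernel-verified Lean document; each statement's English description precedes it below -/
import Mathlib

section
/- Let X be a topological space and Y a T0 Alexandroff space. For any continuous map f : X → Y, the intersection of all open subsets of C(X,Y) containing f equals the set {g ∈ C(X,Y) : g(x) ≤ f(x) for all x ∈ X}, where ≤ is the specialization order on Y. -/
/-- Specialization order on a topological space: `x ≤ y` iff `y ∈ closure {x}`. -/
def specLE {X : Type*} [TopologicalSpace X] (x y : X) : Prop := y ∈ closure ({x} : Set X)

section

variable {X Y : Type*} [TopologicalSpace X] [TopologicalSpace Y]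

theorem specLE_iff_specializes {x y : X} : specLE x y ↔ x ⤳ y :=
  specializes_iff_mem_closure.symm

theorem sInter_isOpen_mem_eq_setOf_specLE (x : X) :
    ⋂₀ {U : Set X | IsOpen U ∧ x ∈ U} = {y | specLE y x} := by
  ext y
  calc y ∈ ⋂₀ {U : Set X | IsOpen U ∧ x ∈ U}
      ↔ ∀ U : Set X, IsOpen U → x ∈ U → y ∈ U := by
        simp only [Set.mem_sInter, Set.mem_ofPred_eq, and_imp]
    _ ↔ y ⤳ x := specializes_iff_forall_open.symm
    _ ↔ specLE y x := specLE_iff_specializes.symm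

/- Open sets of `Y` are down-sets, so if `g ≤ f` pointwise then `f '' K ⊆ U` forces `g '' K ⊆ U`
for `U` open. Hence the compact-open topology has the same specialization order as the coarser
topology of pointwise convergence. -/
theorem specLE_continuousMap_iff {f g : C(X, Y)} :
    specLE g f ↔ ∀ x, specLE (g x) (f x) :=
  calc specLE g f
      ↔ g ⤳ f := specLE_iff_specializes
    _ ↔ ⇑g ⤳ ⇑f := ContinuousMap.specializes_coe.symm
    _ ↔ ∀ x, g x ⤳ f x := specializes_pi
    _ ↔ ∀ x, specLE (g x) (f x) := forall_congr' fun _ ↦ specLE_iff_specializes.symm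

theorem stmt3_general (f : C(X, Y)) :
    ⋂₀ {U : Set C(X, Y) | IsOpen U ∧ f ∈ U} = {g : C(X, Y) | ∀ x, specLE (g x) (f x)} := by
  simp only [sInter_isOpen_mem_eq_setOf_specLE, specLE_continuousMap_iff]

end

/-- For `X` a topological space and `Y` a T0 Alexandroff space, the intersection of all
open subsets of `C(X,Y)` (compact-open topology) containing `f` is
`{g : g(x) ≤ f(x) for all x}`. -/
theorem stmt3 {X Y : Type*} [TopologicalSpace X] [TopologicalSpace Y]
    [AlexandrovDiscrete Y] [T0Space Y] (f : C(X, Y)) :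
    ⋂₀ {U : Set C(X, Y) | IsOpen U ∧ f ∈ U} = {g : C(X, Y) | ∀ x, specLE (g x) (f x)} :=
  stmt3_general f
end

section
/- Let X be a T0 Alexandroff space such that every s-path in X is finite (an fp-space) and such that X is a C-core, i.e. every continuous retraction r : X → X with r(x) ∼ x for all x ∈ X is the identity. Then the connected component of the identity map id_X in the space C(X,X) with the compact-open topology is the singleton {id_X}. -/
/-- Comparability in the specialization order. -/
def specComp {X : Type*} [TopologicalSpace X] (x y : X) : Prop := specLE x y ∨ specLE y x

/-- `X` is an fp-space: every s-path (sequence of pairwise distinct points with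
consecutive points comparable) is finite, i.e. there is no infinite s-path. -/
def NoInfiniteSPath (X : Type*) [TopologicalSpace X] : Prop :=
  ¬ ∃ p : ℕ → X, Function.Injective p ∧ ∀ n, specComp (p n) (p (n + 1))

/-- `X` is a C-core: its only comparative retraction is the identity. -/
def IsCCore (X : Type*) [TopologicalSpace X] : Prop :=
  ∀ r : X → X, Continuous r → r ∘ r = r → (∀ x, specComp (r x) x) → r = id

/-!
Work in the specialization order, for which continuous maps are the monotone ones. In a C-core no
`x` has a least point strictly above it, since moving `x` to that point would be a comparative
retraction. As there are no infinite chains, `x` is therefore a maximal lower bound of a set of at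
most two points above it, and dually a minimal upper bound of at most two points below it. Adjoining
these witnesses again and again generates from `x` a finite set `F`, because otherwise König's lemma
would give an infinite s-path. On `F`, a monotone `g` satisfies `g z ≤ z` everywhere iff it
satisfies `z ≤ g z` everywhere; the first condition is closed and the second one open in `C(X, X)`,
so both hold on the whole connected component of the identity.
-/

open Function Relation Set

section Paths

variable {α : Type*} {r s : α → α → Prop}

/-- The relation `r` has no infinite path of pairwise distinct points. For `r` the comparability
relation of the specialization order this is `NoInfiniteSPath`. -/
def NoInfinitePath (r : α → α → Prop) : Prop :=
  ¬ ∃ p : ℕ → α, Injective p ∧ ∀ n, r (p n) (p (n + 1))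

theorem NoInfinitePath.mono (hs : NoInfinitePath s) (hrs : r ≤ s) : NoInfinitePath r :=
  fun ⟨p, hp, hr⟩ ↦ hs ⟨p, hp, fun n ↦ hrs _ _ (hr n)⟩

theorem NoInfinitePath.wellFoundedLT {P : Type*} [Preorder P]
    (h : NoInfinitePath (SymmGen (α := P) (· ≤ ·))) : WellFoundedLT P :=
  ⟨wellFounded_iff_isEmpty_descending_chain.2 ⟨fun ⟨p, hp⟩ ↦
    h ⟨p, (strictAnti_nat_of_succ_lt hp).injective, fun n ↦ SymmGen.of_gt (hp n)⟩⟩⟩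

theorem NoInfinitePath.wellFoundedGT {P : Type*} [Preorder P]
    (h : NoInfinitePath (SymmGen (α := P) (· ≤ ·))) : WellFoundedGT P :=
  ⟨wellFounded_iff_isEmpty_descending_chain.2 ⟨fun ⟨p, hp⟩ ↦
    h ⟨p, (strictMono_nat_of_lt_succ hp).injective, fun n ↦ SymmGen.of_lt (hp n)⟩⟩⟩

/-- One step of a self-avoiding walk along `r`, from `u` to `t`. A state `(A, a)` consists of the
set `A` of points visited earlier and the current point `a`; as for `<`, the new state comes
first, so that well-foundedness means termination. -/
def SelfAvoidingStep (r : α → α → Prop) (t u : Set α × α) : Prop :=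
  t.1 = insert u.2 u.1 ∧ r u.2 t.2 ∧ t.2 ∉ t.1

theorem NoInfinitePath.wellFounded_selfAvoidingStep (h : NoInfinitePath r) :
    WellFounded (SelfAvoidingStep r) := by
  refine wellFounded_iff_isEmpty_descending_chain.2 ⟨fun ⟨u, hu⟩ ↦ h ⟨fun n ↦ (u n).2, ?_, ?_⟩⟩
  · have visited_mono : Monotone fun n ↦ (u n).1 := monotone_nat_of_le_succ fun n ↦ by
      simpa only [(hu n).1] using subset_insert _ _
    have mem_visited {m n : ℕ} (hmn : m < n) : (u m).2 ∈ (u n).1 :=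
      visited_mono (Nat.succ_le_of_lt hmn) (by simp [(hu m).1])
    refine Injective.of_lt_imp_ne fun m n hmn heq ↦ ?_
    obtain ⟨k, rfl⟩ := Nat.exists_eq_add_of_lt hmn
    exact (hu (m + k)).2.2 (heq ▸ mem_visited hmn)
  · exact fun n ↦ (hu n).2.1

/-- The points reachable from `a` by steps of `r` that do not enter `A`; the starting point `a`
itself may lie in `A`. -/
def reachableAvoiding (r : α → α → Prop) (A : Set α) (a : α) : Set α :=
  {b | ReflTransGen (fun x y ↦ r x y ∧ y ∉ A) a b}

theorem reachableAvoiding_subset (r : α → α → Prop) (A : Set α) (a : α) :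
    reachableAvoiding r A a ⊆
      insert a (⋃ b ∈ {b | r a b ∧ b ∉ insert a A}, reachableAvoiding r (insert a A) b) := by
  intro c hc
  induction hc with
  | refl => exact mem_insert _ _
  | @tail b c _ hbc ih =>
    rcases eq_or_ne c a with rfl | hca
    · exact mem_insert _ _
    have hcA : c ∉ insert a A := by simp [hca, hbc.2]
    refine mem_insert_of_mem _ ?_
    rcases ih with rfl | hb
    · exact mem_biUnion ⟨hbc.1, hcA⟩ .refl
    · obtain ⟨d, hd, hdb⟩ := mem_iUnion₂.1 hb
      exact mem_biUnion hd (.tail hdb ⟨hbc.1, hcA⟩)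

theorem NoInfinitePath.finite_reachableAvoiding (h : NoInfinitePath r)
    (hfin : ∀ a, {b | r a b}.Finite) (u : Set α × α) : (reachableAvoiding r u.1 u.2).Finite := by
  induction u using h.wellFounded_selfAvoidingStep.induction with
  | h u ih =>
    refine .subset (.insert _ (.biUnion ((hfin u.2).subset fun b hb ↦ hb.1) ?_))
      (reachableAvoiding_subset r u.1 u.2)
    exact fun b hb ↦ ih (insert u.2 u.1, b) ⟨rfl, hb⟩

theorem NoInfinitePath.finite_setOf_reflTransGen (h : NoInfinitePath r)
    (hfin : ∀ a, {b | r a b}.Finite) (a : α) : {b | ReflTransGen r a b}.Finite := by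
  simpa [reachableAvoiding] using h.finite_reachableAvoiding hfin (∅, a)

end Paths

section Rigid

variable {P : Type*} [Preorder P] {F : Set P} {g : P → P}

/-- A subset `F` of a preorder is rigid if each `z ∈ F` is a maximal lower bound of the points of
`F` above it and a minimal upper bound of the points of `F` below it. In a partial order, a monotone
map that moves the points of a finite rigid set only upwards, or only downwards, fixes them. -/
structure IsRigid (F : Set P) : Prop where
  maximal : ∀ z ∈ F, Maximal (· ∈ lowerBounds (F ∩ Ioi z)) z
  minimal : ∀ z ∈ F, Minimal (· ∈ upperBounds (F ∩ Iio z)) z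

theorem IsRigid.dual (hF : IsRigid F) : IsRigid (OrderDual.ofDual ⁻¹' F) :=
  ⟨hF.minimal, hF.maximal⟩

theorem IsRigid.map_le_of_le_map (hF : IsRigid F) (hfin : F.Finite) (hg : Monotone g)
    (hle : ∀ z ∈ F, z ≤ g z) : ∀ z ∈ F, g z ≤ z := by
  by_contra! ⟨z, hz⟩
  obtain ⟨m, ⟨hmF, hgm⟩, hmax⟩ := (hfin.sep fun z ↦ ¬ g z ≤ z).exists_maximal ⟨z, hz⟩
  refine hgm ((hF.maximal m hmF).2 ?_ (hle m hmF))
  rintro y ⟨hyF, hmy⟩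
  have hgy : g y ≤ y := by_contra fun hgy ↦ hmy.not_ge (hmax ⟨hyF, hgy⟩ hmy.le)
  exact (hg hmy.le).trans hgy

theorem IsRigid.forall_map_le_iff_forall_le_map (hF : IsRigid F) (hfin : F.Finite)
    (hg : Monotone g) : (∀ z ∈ F, g z ≤ z) ↔ ∀ z ∈ F, z ≤ g z :=
  ⟨hF.dual.map_le_of_le_map hfin hg.dual, hF.map_le_of_le_map hfin hg⟩

theorem exists_finite_maximal_lowerBounds [WellFoundedLT P] {x : P}
    (hx : ∀ y, ¬ IsLeast (Ioi x) y) :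
    ∃ s : Set P, s.Finite ∧ s ⊆ Ioi x ∧ Maximal (· ∈ lowerBounds s) x := by
  rcases (Ioi x).eq_empty_or_nonempty with hempty | hne
  · refine ⟨∅, finite_empty, empty_subset _, by simp, fun a _ hxa ↦ ?_⟩
    exact not_lt_iff_le_imp_ge.1 (eq_empty_iff_forall_notMem.1 hempty a) hxa
  obtain ⟨m, hxm, hmin⟩ := exists_minimal_of_wellFoundedLT (· ∈ Ioi x) hne
  obtain ⟨w, hxw, hmw⟩ : ∃ w, x < w ∧ ¬ m ≤ w := by
    by_contra! hm
    exact hx m ⟨hxm, hm⟩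
  have hsub : {m, w} ⊆ Ioi x := pair_subset hxm hxw
  refine ⟨{m, w}, toFinite _, hsub, fun y hy ↦ (hsub hy).le, fun a ha hxa ↦ ?_⟩
  by_contra hax
  have hma : m ≤ a := hmin (lt_of_le_not_ge hxa hax) (ha (mem_insert _ _))
  exact hmw (hma.trans (ha (mem_insert_of_mem _ rfl)))

theorem exists_finite_minimal_upperBounds [WellFoundedGT P] {x : P}
    (hx : ∀ y, ¬ IsGreatest (Iio x) y) :
    ∃ s : Set P, s.Finite ∧ s ⊆ Iio x ∧ Minimal (· ∈ upperBounds s) x :=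
  exists_finite_maximal_lowerBounds (P := Pᵒᵈ) hx

theorem exists_finite_isRigid (hpath : NoInfinitePath (SymmGen (α := P) (· ≤ ·)))
    (hup : ∀ x y : P, ¬ IsLeast (Ioi x) y) (hdown : ∀ x y : P, ¬ IsGreatest (Iio x) y) (x : P) :
    ∃ F : Set P, F.Finite ∧ x ∈ F ∧ IsRigid F := by
  have : WellFoundedLT P := hpath.wellFoundedLT
  have : WellFoundedGT P := hpath.wellFoundedGT
  choose U hUfin hUsub hUmax using fun a ↦ exists_finite_maximal_lowerBounds (hup a)
  choose D hDfin hDsub hDmin using fun a ↦ exists_finite_minimal_upperBounds (hdown a)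
  have hpathUD : NoInfinitePath fun a b ↦ b ∈ U a ∪ D a := hpath.mono fun a b hb ↦
    hb.imp (fun hb ↦ (hUsub a hb).le) (fun hb ↦ (hDsub a hb).le)
  refine ⟨{b | ReflTransGen (fun a b ↦ b ∈ U a ∪ D a) x b},
    hpathUD.finite_setOf_reflTransGen (fun a ↦ (hUfin a).union (hDfin a)) x, .refl, ?_, ?_⟩
  · refine fun z hz ↦ ⟨fun y hy ↦ hy.2.le, fun a ha ↦ (hUmax z).2 fun y hy ↦ ha ?_⟩
    exact ⟨.tail hz (.inl hy), hUsub z hy⟩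
  · refine fun z hz ↦ ⟨fun y hy ↦ hy.2.le, fun a ha ↦ (hDmin z).2 fun y hy ↦ ha ?_⟩
    exact ⟨.tail hz (.inr hy), hDsub z hy⟩

end Rigid

section UpdateId

variable {P : Type*} [PartialOrder P] [DecidableEq P] {x y : P}

theorem monotone_update_id_of_isLeast (h : IsLeast (Ioi x) y) : Monotone (update id x y) := by
  intro a b hab
  rcases eq_or_ne a x with rfl | ha
  · rcases eq_or_ne b a with rfl | hb
    · rfl
    · simpa [hb] using h.2 (lt_of_le_of_ne hab hb.symm)
  · rcases eq_or_ne b x with rfl | hb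
    · simpa [ha] using hab.trans h.1.le
    · simpa [ha, hb] using hab

theorem monotone_update_id_of_isGreatest (h : IsGreatest (Iio x) y) :
    Monotone (update id x y) :=
  (monotone_update_id_of_isLeast (P := Pᵒᵈ) h).dual

end UpdateId

section UpperSetTopology

variable {X : Type*} [TopologicalSpace X]

theorem isUpperSet_specializationPreorder [AlexandrovDiscrete X] :
    @Topology.IsUpperSet X _ (specializationPreorder X) :=
  letI := specializationPreorder X
  ⟨by ext s; exact isOpen_iff_forall_specializes.trans forall_comm⟩

theorem specComp_eq_symmGen_le [Preorder X] [Topology.IsUpperSet X] :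
    specComp (X := X) = SymmGen (· ≤ ·) := by
  ext x y
  simp only [specComp, specLE, SymmGen, Topology.IsUpperSet.closure_singleton, mem_Iic, or_comm]

theorem IsCCore.eq_of_monotone_update_id [PartialOrder X] [Topology.IsUpperSet X] [DecidableEq X]
    (hcore : IsCCore X) {x y : X} (hyx : SymmGen (· ≤ ·) y x) (hmono : Monotone (update id x y)) :
    y = x := by
  have hretract : update id x y = id := by
    refine hcore _ (Topology.IsUpperSet.monotone_iff_continuous.1 hmono) ?_ fun z ↦ ?_
    · ext z
      rcases eq_or_ne z x with rfl | hz
      · rcases eq_or_ne y z with rfl | hy <;> simp [*]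
      · simp [hz]
    · rw [specComp_eq_symmGen_le]
      rcases eq_or_ne z x with rfl | hz
      · simpa using hyx
      · simp [hz]
  simpa using congrFun hretract x

theorem IsCCore.not_isLeast_Ioi [PartialOrder X] [Topology.IsUpperSet X] (hcore : IsCCore X)
    (x y : X) : ¬ IsLeast (Ioi x) y := by
  classical
  exact fun h ↦ h.1.ne' (hcore.eq_of_monotone_update_id (.of_gt h.1)
    (monotone_update_id_of_isLeast h))

theorem IsCCore.not_isGreatest_Iio [PartialOrder X] [Topology.IsUpperSet X] (hcore : IsCCore X)
    (x y : X) : ¬ IsGreatest (Iio x) y := by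
  classical
  exact fun h ↦ h.1.ne (hcore.eq_of_monotone_update_id (.of_lt h.1)
    (monotone_update_id_of_isGreatest h))

theorem IsRigid.isClopen_setOf_map_le [Preorder X] [Topology.IsUpperSet X] {F : Set X}
    (hF : IsRigid F) (hfin : F.Finite) : IsClopen {g : C(X, X) | ∀ z ∈ F, g z ≤ z} := by
  constructor
  · simp only [ofPred_forall]
    exact isClosed_biInter fun z _ ↦ (Topology.IsUpperSet.isClosed_iff_isLower.2
      (isLowerSet_Iic z)).preimage (continuous_eval_const z)
  · have hmono (g : C(X, X)) : Monotone g :=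
      Topology.IsUpperSet.monotone_iff_continuous.2 g.continuous
    simp only [hF.forall_map_le_iff_forall_le_map hfin (hmono _), ofPred_forall]
    exact hfin.isOpen_biInter fun z _ ↦ (Topology.IsUpperSet.isOpen_iff_isUpperSet.2
      (isUpperSet_Ici z)).preimage (continuous_eval_const z)

theorem IsRigid.eqOn_id_of_mem_connectedComponent [PartialOrder X] [Topology.IsUpperSet X]
    {F : Set X} (hF : IsRigid F) (hfin : F.Finite) {g : C(X, X)}
    (hg : g ∈ connectedComponent (ContinuousMap.id X)) : EqOn g id F := by
  have hle : ∀ z ∈ F, g z ≤ z :=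
    (hF.isClopen_setOf_map_le hfin).connectedComponent_subset (fun _ _ ↦ le_rfl) hg
  have hmono : Monotone g := Topology.IsUpperSet.monotone_iff_continuous.2 g.continuous
  exact fun z hz ↦ (hle z hz).antisymm ((hF.forall_map_le_iff_forall_le_map hfin hmono).1 hle z hz)

end UpperSetTopology

/-- If a T0 Alexandroff space `X` is an fp-space and a C-core, then the connected
component of `id_X` in `C(X,X)` (compact-open topology) is a singleton. -/
theorem stmt17 {X : Type*} [TopologicalSpace X] [AlexandrovDiscrete X] [T0Space X]
    (hfp : NoInfiniteSPath X) (hcore : IsCCore X) :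
    connectedComponent (ContinuousMap.id X : C(X, X)) = {ContinuousMap.id X} := by
  -- This is the reverse of `specLE`; comparability and the argument are symmetric under reversal.
  let _ : PartialOrder X := specializationOrder X
  have : Topology.IsUpperSet X := isUpperSet_specializationPreorder
  have hpath : NoInfinitePath (SymmGen (α := X) (· ≤ ·)) := specComp_eq_symmGen_le (X := X) ▸ hfp
  refine Subset.antisymm (fun g hg ↦ ?_) (singleton_subset_iff.2 mem_connectedComponent)
  refine mem_singleton_iff.2 (ContinuousMap.ext fun x ↦ ?_)
  obtain ⟨F, hfin, hxF, hF⟩ :=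
    exists_finite_isRigid hpath hcore.not_isLeast_Ioi hcore.not_isGreatest_Iio x
  exact hF.eqOn_id_of_mem_connectedComponent hfin hg hxF
end
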